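/- For every integer n ≥ 0, A_n·ζ(3) − B_n > 0, and the sequence A_n·ζ(3) − B_n tends to 0 as n → ∞. -/

import Mathlib

/-- The Apéry sequence `A_n = ∑_{ℓ=0}^n binom(n,ℓ)² binom(n+ℓ,ℓ)²`. -/
def aperyA (n : ℕ) : ℕ :=
  ∑ ℓ ∈ Finset.range (n + 1), (n.choose ℓ) ^ 2 * ((n + ℓ).choose ℓ) ^ 2

/-- The second Apéry sequence (with `B_0 = 0`). -/
noncomputable def aperyB (n : ℕ) : ℚ :=
  ∑ ℓ ∈ Finset.range (n + 1),
    ((n.choose ℓ : ℚ)) ^ 2 * (((n + ℓ).choose ℓ : ℚ)) ^ 2 *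
      ((∑ m ∈ Finset.Icc 1 n, (1 : ℚ) / (m : ℚ) ^ 3) -
        ∑ m ∈ Finset.Icc 1 ℓ,
          (-1 : ℚ) ^ m / (2 * (m : ℚ) ^ 3 * (n.choose m : ℚ) * ((n + m).choose m : ℚ)))

/-!
Both `A n` and `B n` satisfy Apéry's three-term recurrence, by creative telescoping of their
summands. Hence their Casoratian is explicit:
`(n + 1) ^ 3 * (B (n + 1) * A n - B n * A (n + 1)) = 6`. Since `B n / A n` is a weighted mean of
numbers `c n k` that tend to `ζ(3)` uniformly in `k`, telescoping the differences
`B (n + 1) / A (n + 1) - B n / A n` gives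
`A n * ζ(3) - B n = ∑ k, 6 * A n / ((n + k + 1) ^ 3 * A (n + k) * A (n + k + 1))`,
a series of positive terms dominated by six times the `n`-th tail of `ζ(3)`, as `A` is monotone.
-/

section Operator

variable {R : Type*} [CommRing R]

/-- The operator whose kernel consists of the solutions of Apéry's recurrence
`(N + 1)³ u_{N+1} - (34 N³ + 51 N² + 27 N + 5) u_N + N³ u_{N-1} = 0`, written with `N = n + 1` and
the middle coefficient factored as `(2N + 1) (17 N² + 17 N + 5)`. -/
def aperyOperator (u : ℕ → R) (n : ℕ) : R :=
  ((n : R) + 2) ^ 3 * u (n + 2) - (2 * n + 3) * (17 * (n : R) ^ 2 + 51 * n + 39) * u (n + 1) +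
    ((n : R) + 1) ^ 3 * u n

lemma aperyOperator_sum {ι : Type*} (s : Finset ι) (f : ℕ → ι → R) (n : ℕ) :
    aperyOperator (fun m => ∑ i ∈ s, f m i) n = ∑ i ∈ s, aperyOperator (fun m => f m i) n := by
  simp only [aperyOperator, Finset.mul_sum, Finset.sum_add_distrib, Finset.sum_sub_distrib]

lemma aperyOperator_sum_range_eq_zero_of_telescope {f : ℕ → ℕ → R} {G : ℕ → R} {n : ℕ}
    (hf : ∀ m k, m < k → f m k = 0)
    (hzero : aperyOperator (fun m => f m 0) n = G 0)
    (hsucc : ∀ k, aperyOperator (fun m => f m (k + 1)) n = G (k + 1) - G k)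
    (hG : G (n + 2) = 0) :
    aperyOperator (fun m => ∑ k ∈ Finset.range (m + 1), f m k) n = 0 := by
  have extend (m : ℕ) (hm : m ≤ n + 2) :
      ∑ k ∈ Finset.range (m + 1), f m k = ∑ k ∈ Finset.range (n + 3), f m k :=
    Finset.sum_subset (Finset.range_mono (by omega)) fun k _ hk =>
      hf m k (by simpa using hk)
  calc aperyOperator (fun m => ∑ k ∈ Finset.range (m + 1), f m k) n
      = aperyOperator (fun m => ∑ k ∈ Finset.range (n + 3), f m k) n := by
        simp only [aperyOperator, extend _ le_rfl, extend (n + 1) (by omega),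
          extend n (by omega)]
    _ = ∑ k ∈ Finset.range (n + 2), (G (k + 1) - G k) + G 0 := by
        rw [aperyOperator_sum, Finset.sum_range_succ', hzero]
        simp only [hsucc]
    _ = 0 := by rw [Finset.sum_range_sub, hG, sub_add_cancel]

lemma casoratian_of_aperyOperator_eq_zero {u v : ℕ → R} (hu : ∀ n, aperyOperator u n = 0)
    (hv : ∀ n, aperyOperator v n = 0) (n : ℕ) :
    ((n : R) + 1) ^ 3 * (v (n + 1) * u n - v n * u (n + 1)) = v 1 * u 0 - v 0 * u 1 := by
  induction n with
  | zero => simp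
  | succ n ih =>
    have hun := hu n
    have hvn := hv n
    simp only [aperyOperator] at hun hvn
    push_cast
    linear_combination ih + u (n + 1) * hvn - v (n + 1) * hun

end Operator

section Binomials

/-- Apéry's binomial product `binom(n,k) binom(n+k,k)`, whose squares sum to `A_n`. -/
def aperyBinom (n k : ℕ) : ℕ := n.choose k * (n + k).choose k

lemma cast_choose_succ_right_mul (R : Type*) [CommRing R] (n k : ℕ) :
    (n.choose (k + 1) : R) * (k + 1) = n.choose k * (n - k) := by
  have absorb := congrArg (Nat.cast : ℕ → R) (Nat.add_one_mul_choose_eq n k)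
  rw [Nat.choose_succ_succ'] at absorb
  push_cast at absorb
  linear_combination -absorb

lemma aperyBinom_eq_zero {n k : ℕ} (h : n < k) : aperyBinom n k = 0 := by
  rw [aperyBinom, Nat.choose_eq_zero_of_lt h, zero_mul]

@[simp]
lemma aperyBinom_zero_right (n : ℕ) : aperyBinom n 0 = 1 := by
  simp [aperyBinom]

lemma add_one_le_aperyBinom {n k : ℕ} (hk : k ≠ 0) (hkn : k ≤ n) : n + 1 ≤ aperyBinom n k := by
  have left : 1 ≤ n.choose k := Nat.choose_pos hkn
  have right : n + 1 ≤ (n + k).choose k :=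
    calc n + 1 = (n + 1).choose n := (Nat.choose_succ_self_right n).symm
      _ ≤ (n + k).choose n := Nat.choose_le_choose n (by omega)
      _ = (n + k).choose k := Nat.choose_symm_add
  simpa [aperyBinom] using Nat.mul_le_mul left right

lemma aperyBinom_pos {n k : ℕ} (h : k ≤ n) : 0 < aperyBinom n k :=
  Nat.mul_pos (Nat.choose_pos h) (Nat.choose_pos (Nat.le_add_left k n))

lemma aperyBinom_le_succ_left (n k : ℕ) : aperyBinom n k ≤ aperyBinom (n + 1) k :=
  Nat.mul_le_mul (Nat.choose_le_choose k (by omega)) (Nat.choose_le_choose k (by omega))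

lemma aperyBinom_succ_right (n k : ℕ) :
    (aperyBinom n (k + 1) : ℚ) = aperyBinom n k * ((n - k) * (n + k + 1) / (k + 1) ^ 2) := by
  have hn := cast_choose_succ_right_mul ℚ n k
  have hnk : ((n + k + 1).choose (k + 1) : ℚ) * (k + 1) = (n + k).choose k * (n + k + 1) := by
    exact_mod_cast (Nat.add_one_mul_choose_eq (n + k) k).symm.trans (mul_comm _ _)
  rw [← mul_div_assoc, eq_div_iff (by positivity)]
  simp only [aperyBinom, ← add_assoc]
  push_cast
  linear_combination ((n + k + 1).choose (k + 1) * (k + 1) : ℚ) * hn + n.choose k * (n - k) * hnk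

lemma aperyBinom_succ_succ (n k : ℕ) :
    (aperyBinom (n + 1) (k + 1) : ℚ) =
      aperyBinom n k * ((n + k + 1) * (n + k + 2) / (k + 1) ^ 2) := by
  have hn : ((n + 1).choose (k + 1) : ℚ) * (k + 1) = (n + 1) * n.choose k := by
    exact_mod_cast (Nat.add_one_mul_choose_eq n k).symm
  have hnk : ((n + k + 2).choose (k + 1) : ℚ) * (k + 1) = (n + k + 2) * (n + k + 1).choose k := by
    exact_mod_cast (Nat.add_one_mul_choose_eq (n + k + 1) k).symm
  have hnk' : ((n + k + 1).choose k : ℚ) * (n + 1) = (n + k).choose k * (n + k + 1) := by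
    have h := Nat.choose_mul_succ_eq (n + k) k
    rw [show n + k + 1 - k = n + 1 by omega] at h
    exact_mod_cast h.symm
  rw [← mul_div_assoc, eq_div_iff (by positivity), aperyBinom, aperyBinom,
    show n + 1 + (k + 1) = n + k + 2 by ring]
  push_cast
  linear_combination ((n + k + 2).choose (k + 1) * (k + 1) : ℚ) * hn +
    (n + 1) * n.choose k * hnk + (n + k + 2) * n.choose k * hnk'

lemma aperyBinom_succ_right_eq_succ_left (n k : ℕ) :
    (aperyBinom n (k + 1) : ℚ) =
      aperyBinom (n + 1) k * ((n - k) * (n + 1 - k) / (k + 1) ^ 2) := by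
  have hn := cast_choose_succ_right_mul ℚ n k
  have hn' : ((n + 1).choose k : ℚ) * (n + 1 - k) = n.choose k * (n + 1) := by
    have h := cast_choose_succ_right_mul ℚ (n + 1) k
    have absorb : ((n : ℚ) + 1) * n.choose k = (n + 1).choose (k + 1) * (k + 1) := by
      exact_mod_cast Nat.add_one_mul_choose_eq n k
    push_cast at h
    linear_combination -h - absorb
  have hnk := cast_choose_succ_right_mul ℚ (n + k + 1) k
  rw [← mul_div_assoc, eq_div_iff (by positivity), aperyBinom, aperyBinom,
    ← add_assoc n k 1, show n + 1 + k = n + k + 1 by ring]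
  push_cast at hnk ⊢
  linear_combination ((n + k + 1).choose (k + 1) * (k + 1) : ℚ) * hn +
    n.choose k * (n - k) * hnk - (n + k + 1).choose k * (n - k) * hn'

end Binomials

section Approximations

/-- The partial sum `∑_{m=1}^n 1/m³` of `ζ(3)`. -/
def cubeHarmonic (n : ℕ) : ℚ := ∑ m ∈ Finset.Icc 1 n, (1 : ℚ) / (m : ℚ) ^ 3

/-- Apéry's double sequence `c_{n,k}` of approximations to `ζ(3)`, of which `B_n / A_n` is the mean
over `k ≤ n` with weights `(aperyBinom n k) ^ 2`. It is meaningful for `k ≤ n` only: for larger `k`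
the extra terms are divisions by zero, hence `0`. -/
def aperyApprox (n k : ℕ) : ℚ :=
  cubeHarmonic n -
    ∑ m ∈ Finset.Icc 1 k, (-1 : ℚ) ^ m / (2 * (m : ℚ) ^ 3 * (aperyBinom n m : ℚ))

lemma cubeHarmonic_succ (n : ℕ) :
    cubeHarmonic (n + 1) = cubeHarmonic n + 1 / ((n : ℚ) + 1) ^ 3 := by
  rw [cubeHarmonic, Finset.sum_Icc_succ_top (by omega), cubeHarmonic]
  push_cast
  rfl

@[simp]
lemma aperyApprox_zero_right (n : ℕ) : aperyApprox n 0 = cubeHarmonic n := by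
  simp [aperyApprox]

lemma aperyApprox_succ_right (n k : ℕ) :
    aperyApprox n (k + 1) =
      aperyApprox n k + (-1) ^ k / (2 * (k + 1) ^ 3 * aperyBinom n (k + 1)) := by
  rw [aperyApprox, Finset.sum_Icc_succ_top (by omega), aperyApprox, pow_succ]
  push_cast
  ring

lemma aperyApprox_succ_left {n k : ℕ} (h : k ≤ n) :
    aperyApprox (n + 1) k =
      aperyApprox n k + (-1) ^ k / ((n + 1) ^ 2 * (n + 1 + k) * aperyBinom n k) := by
  induction k with
  | zero =>
    simp only [aperyApprox_zero_right, cubeHarmonic_succ, aperyBinom_zero_right]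
    push_cast
    field_simp
    ring
  | succ k ih =>
    have hkn : (n : ℚ) - k ≠ 0 := sub_ne_zero.2 (by exact_mod_cast (by omega : n ≠ k))
    have hT : (aperyBinom n k : ℚ) ≠ 0 := by exact_mod_cast (aperyBinom_pos (by omega)).ne'
    rw [aperyApprox_succ_right, aperyApprox_succ_right, ih (by omega), aperyBinom_succ_succ,
      aperyBinom_succ_right]
    push_cast
    rw [pow_succ]
    field_simp
    ring

/-- The factor `(aperyBinom n k) ^ 2` kills the junk divisions by zero of `aperyApprox n k` for
`k > n`, so that in this form the difference equations hold for all `k`. -/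
lemma sq_aperyBinom_mul_aperyApprox_succ_right (n k : ℕ) :
    (aperyBinom n (k + 1) : ℚ) ^ 2 * aperyApprox n (k + 1) =
      aperyBinom n (k + 1) ^ 2 * aperyApprox n k +
        (-1) ^ k * aperyBinom n (k + 1) / (2 * (k + 1) ^ 3) := by
  rw [aperyApprox_succ_right]
  rcases eq_or_ne (aperyBinom n (k + 1) : ℚ) 0 with hT | hT
  · simp [hT]
  · field_simp

lemma sq_aperyBinom_mul_aperyApprox_succ_left (n k : ℕ) :
    (aperyBinom n k : ℚ) ^ 2 * aperyApprox (n + 1) k =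
      aperyBinom n k ^ 2 * aperyApprox n k +
        (-1) ^ k * aperyBinom n k / ((n + 1) ^ 2 * (n + 1 + k)) := by
  rcases le_or_gt k n with h | h
  · have hT : (aperyBinom n k : ℚ) ≠ 0 := by exact_mod_cast (aperyBinom_pos h).ne'
    rw [aperyApprox_succ_left h]
    field_simp
  · simp [aperyBinom_eq_zero h]

lemma sq_aperyBinom_mul_aperyApprox_succ_succ (n k : ℕ) :
    (aperyBinom (n + 1) (k + 1) : ℚ) ^ 2 * aperyApprox (n + 1) (k + 1) =
      aperyBinom (n + 1) (k + 1) ^ 2 * aperyApprox n k +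
        (-1) ^ k * aperyBinom (n + 1) (k + 1) *
          (1 / (2 * (k + 1) ^ 3) + (n + k + 2) / ((n + 1) ^ 2 * (k + 1) ^ 2)) := by
  have left := sq_aperyBinom_mul_aperyApprox_succ_left n k
  have right := sq_aperyBinom_mul_aperyApprox_succ_right (n + 1) k
  rw [aperyBinom_succ_succ] at right ⊢
  rw [right, mul_pow, mul_right_comm, left]
  field_simp
  ring

lemma sq_aperyBinom_mul_aperyApprox_succ_right_eq_succ_left (n k : ℕ) :
    (aperyBinom n (k + 1) : ℚ) ^ 2 * aperyApprox n (k + 1) =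
      aperyBinom n (k + 1) ^ 2 * aperyApprox (n + 1) k +
        (-1) ^ k * aperyBinom n (k + 1) *
          (1 / (2 * (k + 1) ^ 3) - (n - k) / ((n + 1) ^ 2 * (k + 1) ^ 2)) := by
  have left := sq_aperyBinom_mul_aperyApprox_succ_left n k
  have right := sq_aperyBinom_mul_aperyApprox_succ_right n k
  rw [aperyBinom_succ_right] at right ⊢
  rw [right, mul_pow, mul_right_comm _ _ (aperyApprox (n + 1) k), left]
  field_simp
  ring

end Approximations

section Telescoping

/-- The telescoping certificate in `k` of `(aperyBinom n k) ^ 2`: the factor multiplying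
`(aperyBinom (n + 1) k) ^ 2` is Zagier's `4 (2N + 1) (k (2k + 1) - (2N + 1)²)` at `N = n + 1`. -/
def sqBinomCertificate (n k : ℕ) : ℚ :=
  4 * (2 * n + 3) * (k * (2 * k + 1) - (2 * n + 3) ^ 2) * (aperyBinom (n + 1) k : ℚ) ^ 2

/-- The telescoping certificate in `k` of `(aperyBinom n k) ^ 2 * aperyApprox n k`, again written
with `N = n + 1`. -/
def sqBinomApproxCertificate (n k : ℕ) : ℚ :=
  sqBinomCertificate n k * aperyApprox (n + 1) k -
    5 * (2 * n + 3) * (-1) ^ k * k / ((n + 1) * (n + 2)) * aperyBinom (n + 1) k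

lemma aperyOperator_sq_aperyBinom_zero (n : ℕ) :
    aperyOperator (fun m => (aperyBinom m 0 : ℚ) ^ 2) n = sqBinomCertificate n 0 := by
  simp only [aperyOperator, sqBinomCertificate, aperyBinom_zero_right]
  push_cast
  ring

lemma aperyOperator_sq_aperyBinom_succ (n k : ℕ) :
    aperyOperator (fun m => (aperyBinom m (k + 1) : ℚ) ^ 2) n =
      sqBinomCertificate n (k + 1) - sqBinomCertificate n k := by
  simp only [aperyOperator, sqBinomCertificate]
  rw [aperyBinom_succ_succ (n + 1), aperyBinom_succ_right (n + 1),
    aperyBinom_succ_right_eq_succ_left n]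
  push_cast
  field_simp
  ring

lemma aperyOperator_sq_aperyBinom_mul_aperyApprox_zero (n : ℕ) :
    aperyOperator (fun m => (aperyBinom m 0 : ℚ) ^ 2 * aperyApprox m 0) n =
      sqBinomApproxCertificate n 0 := by
  simp only [aperyOperator, sqBinomApproxCertificate, sqBinomCertificate, aperyBinom_zero_right,
    aperyApprox_zero_right, cubeHarmonic_succ]
  push_cast
  field_simp
  ring

lemma aperyOperator_sq_aperyBinom_mul_aperyApprox_succ (n k : ℕ) :
    aperyOperator (fun m => (aperyBinom m (k + 1) : ℚ) ^ 2 * aperyApprox m (k + 1)) n =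
      sqBinomApproxCertificate n (k + 1) - sqBinomApproxCertificate n k := by
  have top := sq_aperyBinom_mul_aperyApprox_succ_succ (n + 1) k
  have mid := sq_aperyBinom_mul_aperyApprox_succ_right (n + 1) k
  have bot := sq_aperyBinom_mul_aperyApprox_succ_right_eq_succ_left n k
  simp only [aperyOperator, sqBinomApproxCertificate, sqBinomCertificate]
  rw [top, bot, mul_assoc _ (_ ^ 2) (aperyApprox (n + 1) (k + 1)), mid,
    aperyBinom_succ_succ (n + 1), aperyBinom_succ_right (n + 1),
    aperyBinom_succ_right_eq_succ_left n]
  push_cast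
  rw [pow_succ]
  field_simp
  ring

end Telescoping

section Recurrences

lemma aperyA_eq_sum (n : ℕ) : aperyA n = ∑ k ∈ Finset.range (n + 1), aperyBinom n k ^ 2 := by
  simp only [aperyA, aperyBinom, mul_pow]

lemma aperyB_eq_sum (n : ℕ) :
    aperyB n = ∑ k ∈ Finset.range (n + 1), (aperyBinom n k : ℚ) ^ 2 * aperyApprox n k := by
  simp only [aperyB, aperyApprox, cubeHarmonic, aperyBinom, mul_pow, Nat.cast_mul, mul_assoc]

theorem aperyOperator_aperyA (n : ℕ) : aperyOperator (fun m => (aperyA m : ℚ)) n = 0 := by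
  simp only [aperyA_eq_sum, Nat.cast_sum, Nat.cast_pow]
  refine aperyOperator_sum_range_eq_zero_of_telescope (G := sqBinomCertificate n)
    (fun m k h => ?_) (aperyOperator_sq_aperyBinom_zero n) (aperyOperator_sq_aperyBinom_succ n) ?_
  · simp [aperyBinom_eq_zero h]
  · simp [sqBinomCertificate, aperyBinom_eq_zero (Nat.lt_succ_self (n + 1))]

theorem aperyOperator_aperyB (n : ℕ) : aperyOperator aperyB n = 0 := by
  simp only [funext aperyB_eq_sum]
  refine aperyOperator_sum_range_eq_zero_of_telescope (G := sqBinomApproxCertificate n)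
    (fun m k h => ?_) (aperyOperator_sq_aperyBinom_mul_aperyApprox_zero n)
    (aperyOperator_sq_aperyBinom_mul_aperyApprox_succ n) ?_
  · simp [aperyBinom_eq_zero h]
  · simp [sqBinomApproxCertificate, sqBinomCertificate,
      aperyBinom_eq_zero (Nat.lt_succ_self (n + 1))]

theorem aperyA_aperyB_casoratian (n : ℕ) :
    ((n : ℚ) + 1) ^ 3 * (aperyB (n + 1) * aperyA n - aperyB n * aperyA (n + 1)) = 6 := by
  rw [casoratian_of_aperyOperator_eq_zero aperyOperator_aperyA aperyOperator_aperyB]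
  norm_num [aperyA, aperyB, Finset.sum_range_succ]

end Recurrences

section Convergence

open Filter Topology

lemma aperyA_pos (n : ℕ) : 0 < aperyA n := by
  rw [aperyA_eq_sum]
  exact Finset.sum_pos (fun k hk => pow_pos (aperyBinom_pos (Finset.mem_range_succ_iff.1 hk)) 2)
    Finset.nonempty_range_add_one

lemma aperyA_monotone : Monotone aperyA := by
  refine monotone_nat_of_le_succ fun n => ?_
  rw [aperyA_eq_sum, aperyA_eq_sum]
  calc ∑ k ∈ Finset.range (n + 1), aperyBinom n k ^ 2
      ≤ ∑ k ∈ Finset.range (n + 1), aperyBinom (n + 1) k ^ 2 :=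
        Finset.sum_le_sum fun k _ => Nat.pow_le_pow_left (aperyBinom_le_succ_left n k) 2
    _ ≤ ∑ k ∈ Finset.range (n + 1 + 1), aperyBinom (n + 1) k ^ 2 :=
        Finset.sum_le_sum_of_subset (Finset.range_mono (Nat.le_succ _))

lemma cubeHarmonic_eq_sum_range (n : ℕ) :
    cubeHarmonic n = ∑ m ∈ Finset.range n, 1 / ((m : ℚ) + 1) ^ 3 := by
  induction n with
  | zero => simp [cubeHarmonic]
  | succ n ih => rw [cubeHarmonic_succ, ih, Finset.sum_range_succ]

lemma abs_aperyApprox_sub_cubeHarmonic_le {n k : ℕ} (h : k ≤ n) :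
    |aperyApprox n k - cubeHarmonic n| ≤ cubeHarmonic n / (n + 1) := by
  have term_le (m : ℕ) (hm : m ∈ Finset.Icc 1 k) :
      |(-1 : ℚ) ^ m / (2 * (m : ℚ) ^ 3 * aperyBinom n m)| ≤ 1 / (m : ℚ) ^ 3 / (n + 1) := by
    obtain ⟨hm1, hmk⟩ := Finset.mem_Icc.1 hm
    have hT : (n : ℚ) + 1 ≤ aperyBinom n m := by
      exact_mod_cast add_one_le_aperyBinom (by omega) (hmk.trans h)
    have hm3 : (0 : ℚ) < (m : ℚ) ^ 3 := by positivity
    rw [abs_div, abs_neg_one_pow, abs_of_nonneg (by positivity), div_div]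
    gcongr
    linarith
  rw [aperyApprox, sub_sub_cancel_left, abs_neg, cubeHarmonic, Finset.sum_div]
  calc |∑ m ∈ Finset.Icc 1 k, (-1 : ℚ) ^ m / (2 * (m : ℚ) ^ 3 * aperyBinom n m)|
      ≤ ∑ m ∈ Finset.Icc 1 k, 1 / (m : ℚ) ^ 3 / (n + 1) :=
        (Finset.abs_sum_le_sum_abs _ _).trans (Finset.sum_le_sum term_le)
    _ ≤ ∑ m ∈ Finset.Icc 1 n, 1 / (m : ℚ) ^ 3 / (n + 1) :=
        Finset.sum_le_sum_of_subset_of_nonneg (Finset.Icc_subset_Icc_right h)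
          fun m _ _ => by positivity

lemma abs_aperyB_sub_le (n : ℕ) :
    |aperyB n - cubeHarmonic n * aperyA n| ≤ cubeHarmonic n / (n + 1) * aperyA n := by
  have weighted_error : aperyB n - cubeHarmonic n * aperyA n =
      ∑ k ∈ Finset.range (n + 1),
        (aperyBinom n k : ℚ) ^ 2 * (aperyApprox n k - cubeHarmonic n) := by
    rw [aperyB_eq_sum, aperyA_eq_sum]
    push_cast
    simp only [mul_sub, Finset.sum_sub_distrib, ← Finset.sum_mul, mul_comm (cubeHarmonic n)]
  rw [weighted_error, aperyA_eq_sum, Nat.cast_sum, Finset.mul_sum]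
  refine (Finset.abs_sum_le_sum_abs _ _).trans (Finset.sum_le_sum fun k hk => ?_)
  rw [Nat.cast_pow, abs_mul, abs_of_nonneg (sq_nonneg _), mul_comm]
  gcongr
  exact abs_aperyApprox_sub_cubeHarmonic_le (Finset.mem_range_succ_iff.1 hk)

lemma summable_one_div_add_one_cube : Summable fun m : ℕ => 1 / ((m : ℝ) + 1) ^ 3 := by
  simpa using (summable_nat_add_iff 1).2 (Real.summable_one_div_nat_pow.2 (by norm_num : 1 < 3))

lemma tendsto_cubeHarmonic :
    Tendsto (fun n => (cubeHarmonic n : ℝ)) atTop (𝓝 (∑' m : ℕ, 1 / ((m : ℝ) + 1) ^ 3)) := by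
  simpa [cubeHarmonic_eq_sum_range] using summable_one_div_add_one_cube.hasSum.tendsto_sum_nat

lemma tendsto_aperyB_div_aperyA :
    Tendsto (fun n => (aperyB n : ℝ) / aperyA n) atTop
      (𝓝 (∑' m : ℕ, 1 / ((m : ℝ) + 1) ^ 3)) := by
  have error_le (n : ℕ) :
      ‖(aperyB n : ℝ) / aperyA n - cubeHarmonic n‖ ≤ cubeHarmonic n * (1 / ((n : ℝ) + 1)) := by
    have hA : (0 : ℝ) < aperyA n := by exact_mod_cast aperyA_pos n
    rw [div_sub' hA.ne', norm_div, Real.norm_of_nonneg hA.le, div_le_iff₀ hA, mul_one_div,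
      Real.norm_eq_abs, mul_comm (aperyA n : ℝ)]
    exact_mod_cast abs_aperyB_sub_le n
  have error_tendsto := squeeze_zero_norm error_le (by
    simpa using tendsto_cubeHarmonic.mul (tendsto_one_div_add_atTop_nhds_zero_nat (𝕜 := ℝ)))
  simpa using error_tendsto.add tendsto_cubeHarmonic

lemma aperyB_div_aperyA_succ_sub (n : ℕ) :
    (aperyB (n + 1) : ℝ) / aperyA (n + 1) - aperyB n / aperyA n =
      6 / (((n : ℝ) + 1) ^ 3 * aperyA n * aperyA (n + 1)) := by
  have casoratian :
      ((n : ℝ) + 1) ^ 3 * (aperyB (n + 1) * aperyA n - aperyB n * aperyA (n + 1)) = 6 := by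
    exact_mod_cast aperyA_aperyB_casoratian n
  have hA : (aperyA n : ℝ) ≠ 0 := by exact_mod_cast (aperyA_pos n).ne'
  have hA' : (aperyA (n + 1) : ℝ) ≠ 0 := by exact_mod_cast (aperyA_pos (n + 1)).ne'
  rw [← casoratian]
  field_simp

/-- The `k`-th term of the series for `A_n ζ(3) - B_n` obtained by telescoping
`B_{m+1} / A_{m+1} - B_m / A_m` over `m = k + n`. -/
noncomputable def aperyRemainderTerm (n k : ℕ) : ℝ :=
  6 * aperyA n / (((k + n : ℕ) + 1) ^ 3 * aperyA (k + n) * aperyA (k + n + 1))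

lemma aperyRemainderTerm_pos (n k : ℕ) : 0 < aperyRemainderTerm n k := by
  have hA (m : ℕ) : (0 : ℝ) < aperyA m := by exact_mod_cast aperyA_pos m
  have := hA n
  have := hA (k + n)
  have := hA (k + n + 1)
  unfold aperyRemainderTerm
  positivity

lemma aperyRemainderTerm_le (n k : ℕ) :
    aperyRemainderTerm n k ≤ 6 * (1 / (((k + n : ℕ) : ℝ) + 1) ^ 3) := by
  have hA : (0 : ℝ) < aperyA (k + n) := by exact_mod_cast aperyA_pos (k + n)
  have hA' : (1 : ℝ) ≤ aperyA (k + n + 1) := by exact_mod_cast aperyA_pos (k + n + 1)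
  have mono : (aperyA n : ℝ) ≤ aperyA (k + n) := by
    exact_mod_cast aperyA_monotone (Nat.le_add_left n k)
  have ratio_le_one : (aperyA n : ℝ) / (aperyA (k + n) * aperyA (k + n + 1)) ≤ 1 :=
    div_le_one_of_le₀ (mono.trans (le_mul_of_one_le_right hA.le hA')) (by positivity)
  calc aperyRemainderTerm n k
      = 6 * (1 / (((k + n : ℕ) : ℝ) + 1) ^ 3) *
          (aperyA n / (aperyA (k + n) * aperyA (k + n + 1))) := by
        rw [aperyRemainderTerm]
        field_simp
    _ ≤ 6 * (1 / (((k + n : ℕ) : ℝ) + 1) ^ 3) :=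
        mul_le_of_le_one_right (by positivity) ratio_le_one

lemma sum_range_aperyRemainderTerm (n N : ℕ) :
    ∑ k ∈ Finset.range N, aperyRemainderTerm n k =
      aperyA n * ((aperyB (N + n) : ℝ) / aperyA (N + n)) - aperyB n := by
  induction N with
  | zero =>
    have hA : (aperyA n : ℝ) ≠ 0 := by exact_mod_cast (aperyA_pos n).ne'
    simp [mul_div_cancel₀ _ hA]
  | succ N ih =>
    have step := aperyB_div_aperyA_succ_sub (N + n)
    rw [Finset.sum_range_succ, ih, aperyRemainderTerm, show N + 1 + n = N + n + 1 by ring]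
    linear_combination -(aperyA n : ℝ) * step

theorem hasSum_aperyRemainderTerm (n : ℕ) :
    HasSum (aperyRemainderTerm n)
      (aperyA n * (∑' m : ℕ, 1 / ((m : ℝ) + 1) ^ 3) - aperyB n) := by
  rw [hasSum_iff_tendsto_nat_of_nonneg fun k => (aperyRemainderTerm_pos n k).le]
  simp only [sum_range_aperyRemainderTerm]
  exact ((tendsto_aperyB_div_aperyA.comp (tendsto_add_atTop_nat n)).const_mul _).sub_const _

lemma apery_difference_pos (n : ℕ) :
    0 < (aperyA n : ℝ) * (∑' m : ℕ, 1 / ((m : ℝ) + 1) ^ 3) - aperyB n :=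
  hasSum_lt (fun k => (aperyRemainderTerm_pos n k).le) (aperyRemainderTerm_pos n 0) hasSum_zero
    (hasSum_aperyRemainderTerm n)

lemma apery_difference_le (n : ℕ) :
    (aperyA n : ℝ) * (∑' m : ℕ, 1 / ((m : ℝ) + 1) ^ 3) - aperyB n ≤
      6 * ∑' k : ℕ, 1 / (((k + n : ℕ) : ℝ) + 1) ^ 3 :=
  hasSum_le (aperyRemainderTerm_le n) (hasSum_aperyRemainderTerm n)
    (((summable_nat_add_iff n).2 summable_one_div_add_one_cube).hasSum.mul_left 6)

end Convergence

/-- For every `n ≥ 0` one has `A_n ζ(3) - B_n > 0`, and `A_n ζ(3) - B_n → 0` as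
`n → ∞`. -/
theorem apery_difference_pos_tendsto_zero :
    (∀ n : ℕ,
      0 < (aperyA n : ℝ) * (∑' m : ℕ, 1 / ((m : ℝ) + 1) ^ 3) - (aperyB n : ℝ)) ∧
    Filter.Tendsto
      (fun n : ℕ =>
        (aperyA n : ℝ) * (∑' m : ℕ, 1 / ((m : ℝ) + 1) ^ 3) - (aperyB n : ℝ))
      Filter.atTop (nhds 0) := by
  refine ⟨apery_difference_pos,
    squeeze_zero (fun n => (apery_difference_pos n).le) apery_difference_le ?_⟩
  have tail_tendsto := tendsto_sum_nat_add fun m : ℕ => 1 / ((m : ℝ) + 1) ^ 3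
  simpa only [mul_zero] using tail_tendsto.const_mul 6
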